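/- Let d, r, s, r', s' be integers with d odd, d = (r² + Ns²)/4 = ((r')² + N(s')²)/4, where N > 4, gcd(r,s) = gcd(r',s') = 1, r, r' > 0, r ≡ s (mod 2), r' ≡ s' (mod 2), gcd(d, 2N) = 1. If r·s̄ ≡ r'·s̄' (mod d) (where s̄, s̄' are inverses of s, s' mod d), then r = r' and s = s'. -/

import Mathlib

/-!
Both pairs represent `4 * d` by the form `x ^ 2 + N * y ^ 2`, so by Brahmagupta's identity the
determinant `Δ = r * s' - r' * s` satisfies `N * Δ ^ 2 ≤ (4 * d) ^ 2`, hence `|Δ| < 2 * d` because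
`N > 4`. The congruence gives `d ∣ Δ`. Modulo `2` the form is `x ^ 2` or `(x + y) ^ 2`, so its
zeros lie on a single line over `𝔽₂`, which makes `Δ` even. Thus `2 * d ∣ Δ`, and `Δ = 0`. The
pairs are then proportional and represent the same nonzero number, so they agree up to sign, and
the positivity of `r` and `r'` fixes the sign.
-/

section OrderedRing

variable {R : Type*} [CommRing R] [LinearOrder R] [IsStrictOrderedRing R]

theorem mul_sq_det_le_mul_sq_add_mul_sq (N r s r' s' : R) :
    N * (r * s' - r' * s) ^ 2 ≤ (r ^ 2 + N * s ^ 2) * (r' ^ 2 + N * s' ^ 2) :=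
  calc
    N * (r * s' - r' * s) ^ 2
      ≤ (r * r' + N * s * s') ^ 2 + N * (r * s' - r' * s) ^ 2 :=
        le_add_of_nonneg_left (sq_nonneg _)
    _ = (r ^ 2 + N * s ^ 2) * (r' ^ 2 + N * s' ^ 2) := by ring

theorem eq_and_eq_of_mul_eq_mul_of_sq_add_mul_sq_eq {N r s r' s' : R} (hr : 0 < r)
    (hr' : 0 ≤ r') (hne : r ^ 2 + N * s ^ 2 ≠ 0)
    (hnorm : r ^ 2 + N * s ^ 2 = r' ^ 2 + N * s' ^ 2) (hmul : r * s' = r' * s) :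
    r = r' ∧ s = s' := by
  have hsq : r ^ 2 = r' ^ 2 := by
    refine mul_right_cancel₀ hne ?_
    calc
      r ^ 2 * (r ^ 2 + N * s ^ 2) = r ^ 2 * r' ^ 2 + N * (r * s') ^ 2 := by rw [hnorm]; ring
      _ = r' ^ 2 * (r ^ 2 + N * s ^ 2) := by rw [hmul]; ring
  obtain rfl : r = r' := (sq_eq_sq₀ hr.le hr').mp hsq
  exact ⟨rfl, (mul_left_cancel₀ hr.ne' hmul).symm⟩

end OrderedRing

theorem even_det_of_even_sq_add_mul_sq {N r s r' s' : ℤ} (h : Even (r ^ 2 + N * s ^ 2))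
    (h' : Even (r' ^ 2 + N * s' ^ 2)) : Even (r * s' - r' * s) := by
  simp only [Int.even_add, Int.even_sub, Int.even_mul, Int.even_pow' two_ne_zero] at h h' ⊢
  tauto

theorem mul_modEq_mul_of_mul_inv_modEq {n r s r' s' t t' : ℤ} (ht : s * t ≡ 1 [ZMOD n])
    (ht' : s' * t' ≡ 1 [ZMOD n]) (h : r * t ≡ r' * t' [ZMOD n]) : r * s' ≡ r' * s [ZMOD n] :=
  calc
    r * s' = r * s' * 1 := (mul_one _).symm
    _ ≡ r * s' * (s * t) [ZMOD n] := ht.symm.mul_left _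
    _ = s * s' * (r * t) := by ring
    _ ≡ s * s' * (r' * t') [ZMOD n] := h.mul_left _
    _ = r' * s * (s' * t') := by ring
    _ ≡ r' * s * 1 [ZMOD n] := ht'.mul_left _
    _ = r' * s := mul_one _

theorem stmt_7_general {N d r s r' s' : ℤ} (hN : 4 < N) (hd : Odd d)
    (h : 4 * d = r ^ 2 + N * s ^ 2) (h' : 4 * d = r' ^ 2 + N * s' ^ 2)
    (hr : 0 < r) (hr' : 0 < r') (hcong : r * s' ≡ r' * s [ZMOD d]) :
    r = r' ∧ s = s' := by
  have hd_pos : 0 < d := by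
    have : 0 < r ^ 2 + N * s ^ 2 := by positivity
    lia
  have heven : Even (4 * d) := (by decide : Even (4 : ℤ)).mul_right d
  have hdvd : 2 * d ∣ r * s' - r' * s :=
    (Int.isCoprime_two_left.mpr hd).mul_dvd
      (even_det_of_even_sq_add_mul_sq (h ▸ heven) (h' ▸ heven)).two_dvd hcong.symm.dvd
  have hbound : N * (r * s' - r' * s) ^ 2 ≤ 4 * (2 * d) ^ 2 :=
    calc
      _ ≤ 4 * d * (4 * d) := by
        simpa only [← h, ← h'] using mul_sq_det_le_mul_sq_add_mul_sq N r s r' s'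
      _ = 4 * (2 * d) ^ 2 := by ring
  have hsq_lt : (r * s' - r' * s) ^ 2 < (2 * d) ^ 2 := by
    by_contra! hle
    refine hbound.not_gt ?_
    calc
      4 * (2 * d) ^ 2 < N * (2 * d) ^ 2 := by gcongr
      _ ≤ N * (r * s' - r' * s) ^ 2 := by gcongr
  have hdet : r * s' - r' * s = 0 :=
    Int.eq_zero_of_abs_lt_dvd hdvd (abs_lt_of_sq_lt_sq hsq_lt (by positivity))
  exact eq_and_eq_of_mul_eq_mul_of_sq_add_mul_sq_eq hr hr'.le (by lia) (h.symm.trans h')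
    (sub_eq_zero.mp hdet)

/-- Let `d` be odd with `gcd(d, 2N) = 1`, `N > 4`, and suppose
`4d = r² + Ns² = r'² + Ns'²` with `gcd(r, s) = gcd(r', s') = 1`, `r, r' > 0`,
`r ≡ s (mod 2)`, `r' ≡ s' (mod 2)`. If `r·s̄ ≡ r'·s̄' (mod d)`, where `s̄, s̄'` are
inverses of `s, s'` modulo `d`, then `r = r'` and `s = s'`. -/
theorem stmt_7 (N d r s r' s' : ℤ) (hN : 4 < N) (hd : Odd d)
    (hcop : IsCoprime d (2 * N))
    (h1 : 4 * d = r ^ 2 + N * s ^ 2) (h2 : 4 * d = r' ^ 2 + N * s' ^ 2)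
    (hrs : IsCoprime r s) (hrs' : IsCoprime r' s')
    (hr : 0 < r) (hr' : 0 < r')
    (hpar : r ≡ s [ZMOD 2]) (hpar' : r' ≡ s' [ZMOD 2])
    (sb sb' : ℤ) (hsb : s * sb ≡ 1 [ZMOD d]) (hsb' : s' * sb' ≡ 1 [ZMOD d])
    (hcong : r * sb ≡ r' * sb' [ZMOD d]) :
    r = r' ∧ s = s' :=
  stmt_7_general hN hd h1 h2 hr hr' (mul_modEq_mul_of_mul_inv_modEq hsb hsb' hcong)
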